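/- arXiv:1307.3649 — 5 statements merged into one kernel-verified Lean document; each statement's English description precedes it below -/
import Mathlib

section
/- Euler's identity for continuants: let (u_1, …, u_t) be a sequence of positive integers with continuants 𝔠_{i,j}. Then for all indices with 1 ≤ i ≤ l ≤ m+2 and m ≤ s ≤ t, one has 𝔠_{i,s}·𝔠_{l,m} − 𝔠_{i,m}·𝔠_{l,s} = (−1)^{m−l+1}·𝔠_{i,l−2}·𝔠_{m+2,s}. -/
/-- Auxiliary for continuants: `contAux u i n` is the continuant `𝔠_{i, i+n-1}` of the
sequence `u`, computed via the recurrence `𝔠_{i,j} = u j * 𝔠_{i,j-1} + 𝔠_{i,j-2}`. -/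
def contAux (u : ℤ → ℤ) (i : ℤ) : ℕ → ℤ
  | 0 => 1
  | 1 => u i
  | n + 2 => u (i + n + 1) * contAux u i (n + 1) + contAux u i n

/-- `cont u i j` is the continuant `𝔠_{i,j}` of the sequence `u`, with the boundary
conventions `𝔠_{j+1,j} = 1` and `𝔠_{i,j} = 0` for `i > j + 1` (in particular
`𝔠_{j+2,j} = 0`), and the recurrence `𝔠_{i,j} = u j * 𝔠_{i,j-1} + 𝔠_{i,j-2}`. -/
def cont (u : ℤ → ℤ) (i j : ℤ) : ℤ :=
  if j + 1 < i then 0 else contAux u i (j + 1 - i).toNat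

/-!
For fixed `i`, the continuants `j ↦ 𝔠_{i,j}` solve the second-order linear recurrence
`f (j + 2) = u (j + 2) * f (j + 1) + f j`. Both sides of Euler's identity, as functions of `s`,
solve it from `m` on, so it suffices to compare them at `s = m` and `s = m + 1`. At `s = m` both
vanish. At `s = m + 1` the left-hand side is the Casoratian of two solutions, which changes sign at
every step and can therefore be evaluated at `l - 2`, where `𝔠_{l,l-2} = 0` and `𝔠_{l,l-1} = 1`.
-/

/-- `IsContinuantSeq u k f` says that `f` satisfies the recurrence of continuants of `u` from the
index `k` on. The values of `f` at `k` and `k + 1` are its initial values, so `u` enters only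
through its values at indices `≥ k + 2`. -/
def IsContinuantSeq {R : Type*} [Semiring R] (u : ℤ → R) (k : ℤ) (f : ℤ → R) : Prop :=
  ∀ j, k ≤ j → f (j + 2) = u (j + 2) * f (j + 1) + f j

/-- The Casoratian of `f` and `g` at `j`: the determinant with rows `f (j + 1), f j` and
`g (j + 1), g j`. It is the discrete analogue of the Wronskian. -/
def casoratian {R : Type*} [Ring R] (f g : ℤ → R) (j : ℤ) : R :=
  f (j + 1) * g j - f j * g (j + 1)

namespace IsContinuantSeq

section Semiring

variable {R : Type*} [Semiring R] {u f g : ℤ → R} {k m : ℤ}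

lemma mono (hf : IsContinuantSeq u k f) (hkm : k ≤ m) : IsContinuantSeq u m f :=
  fun j hj => hf j (hkm.trans hj)

lemma mul_const (hf : IsContinuantSeq u k f) (c : R) :
    IsContinuantSeq u k fun j => f j * c := fun j hj => by
  simp only [hf j hj, add_mul, mul_assoc]

lemma eq_of_initial_eq (hf : IsContinuantSeq u k f) (hg : IsContinuantSeq u k g)
    (h₀ : f k = g k) (h₁ : f (k + 1) = g (k + 1)) {s : ℤ} (hks : k ≤ s) : f s = g s := by
  suffices consecutive : f s = g s ∧ f (s + 1) = g (s + 1) from consecutive.1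
  induction s, hks using Int.leInduction with
  | base => exact ⟨h₀, h₁⟩
  | succ j hj ih =>
    refine ⟨ih.2, ?_⟩
    rw [add_assoc, one_add_one_eq_two, hf j hj, hg j hj, ih.1, ih.2]

end Semiring

lemma sub {R : Type*} [Ring R] {u f g : ℤ → R} {k : ℤ} (hf : IsContinuantSeq u k f)
    (hg : IsContinuantSeq u k g) : IsContinuantSeq u k fun j => f j - g j := fun j hj => by
  simp only [hf j hj, hg j hj, mul_sub, add_sub_add_comm]

section CommRing

variable {R : Type*} [CommRing R] {u f g h : ℤ → R} {k m : ℤ}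

lemma casoratian_add_one (hf : IsContinuantSeq u k f) (hg : IsContinuantSeq u k g)
    (hkm : k ≤ m) : casoratian f g (m + 1) = -casoratian f g m := by
  simp only [casoratian, add_assoc, one_add_one_eq_two, hf m hkm, hg m hkm]
  ring

lemma casoratian_eq_negOnePow_mul (hf : IsContinuantSeq u k f) (hg : IsContinuantSeq u k g)
    (hkm : k ≤ m) : casoratian f g m = (m - k).negOnePow * casoratian f g k := by
  induction m, hkm using Int.leInduction with
  | base => simp
  | succ j hj ih =>
    rw [hf.casoratian_add_one hg hj, ih, add_sub_right_comm, Int.negOnePow_succ]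
    push_cast
    ring

lemma mul_sub_mul_eq_casoratian_mul (hf : IsContinuantSeq u m f) (hg : IsContinuantSeq u m g)
    (hh : IsContinuantSeq u m h) (h₀ : h m = 0) (h₁ : h (m + 1) = 1) {s : ℤ} (hms : m ≤ s) :
    f s * g m - f m * g s = casoratian f g m * h s := by
  rw [mul_comm (f m), mul_comm (casoratian f g m)]
  refine ((hf.mul_const (g m)).sub (hg.mul_const (f m))).eq_of_initial_eq
    (hh.mul_const (casoratian f g m)) ?_ ?_ hms
  · rw [h₀, zero_mul, mul_comm, sub_self]
  · rw [h₁, one_mul, casoratian, mul_comm (f m)]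

end CommRing

end IsContinuantSeq

section Continuants

variable (u : ℤ → ℤ) {i j : ℤ}

lemma cont_eq_zero_of_add_one_lt (h : j + 1 < i) : cont u i j = 0 :=
  if_pos h

lemma cont_eq_contAux {n : ℕ} (h : j + 1 = i + n) : cont u i j = contAux u i n := by
  rw [cont, if_neg (by omega), h, add_sub_cancel_left, Int.toNat_natCast]

lemma cont_eq_one_of_add_one_eq (h : j + 1 = i) : cont u i j = 1 :=
  cont_eq_contAux u (n := 0) (by simpa using h)

lemma isContinuantSeq_cont (i : ℤ) : IsContinuantSeq u (i - 2) (cont u i) := by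
  intro j hj
  obtain ⟨n, hn⟩ : ∃ n : ℕ, j + 2 = i + n := ⟨(j + 2 - i).toNat, by omega⟩
  cases n with
  | zero =>
    rw [cont_eq_contAux u (n := 1) (by omega), cont_eq_one_of_add_one_eq u (by omega),
      cont_eq_zero_of_add_one_lt u (by omega), hn]
    simp [contAux]
  | succ n =>
    rw [cont_eq_contAux u (n := n + 2) (by omega), cont_eq_contAux u (n := n + 1) (by omega),
      cont_eq_contAux u (n := n) (by omega), hn, Nat.cast_succ, ← add_assoc, contAux]

lemma casoratian_cont_sub_two (i l : ℤ) :
    casoratian (cont u i) (cont u l) (l - 2) = -cont u i (l - 2) := by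
  rw [casoratian, cont_eq_zero_of_add_one_lt u (i := l) (by omega),
    cont_eq_one_of_add_one_eq u (i := l) (by omega), mul_zero, mul_one, zero_sub]

lemma casoratian_cont {l m : ℤ} (hil : i ≤ l) (hlm : l ≤ m + 2) :
    casoratian (cont u i) (cont u l) m =
      (-1) ^ (m - l + 1).natAbs * cont u i (l - 2) := by
  have hi : IsContinuantSeq u (l - 2) (cont u i) := (isContinuantSeq_cont u i).mono (by omega)
  rw [hi.casoratian_eq_negOnePow_mul (isContinuantSeq_cont u l) (by omega),
    casoratian_cont_sub_two, show m - (l - 2) = m - l + 1 + 1 by ring, Int.negOnePow_succ,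
    Units.val_neg, Int.cast_neg, neg_mul_neg, Int.coe_negOnePow]

end Continuants

theorem euler_identity_for_continuants_general (u : ℤ → ℤ) {i l m s : ℤ} (hil : i ≤ l)
    (hlm : l ≤ m + 2) (hms : m ≤ s) :
    cont u i s * cont u l m - cont u i m * cont u l s =
      (-1 : ℤ) ^ (m - l + 1).natAbs * (cont u i (l - 2) * cont u (m + 2) s) := by
  have isContinuantSeq_from_m {a : ℤ} (ha : a ≤ m + 2) : IsContinuantSeq u m (cont u a) :=
    (isContinuantSeq_cont u a).mono (by omega)
  calc cont u i s * cont u l m - cont u i m * cont u l s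
      = casoratian (cont u i) (cont u l) m * cont u (m + 2) s :=
        (isContinuantSeq_from_m (hil.trans hlm)).mul_sub_mul_eq_casoratian_mul
          (isContinuantSeq_from_m hlm) (isContinuantSeq_from_m le_rfl)
          (cont_eq_zero_of_add_one_lt u (by omega)) (cont_eq_one_of_add_one_eq u (by omega)) hms
    _ = _ := by rw [casoratian_cont u hil hlm, mul_assoc]

theorem euler_identity_for_continuants
    (t : ℕ) (u : ℤ → ℤ) (hu : ∀ k : ℤ, 1 ≤ k → k ≤ (t : ℤ) → 0 < u k)
    (i l m s : ℤ) (hi : 1 ≤ i) (hil : i ≤ l) (hlm : l ≤ m + 2)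
    (hms : m ≤ s) (hst : s ≤ (t : ℤ)) :
    cont u i s * cont u l m - cont u i m * cont u l s =
      (-1 : ℤ) ^ (m - l + 1).natAbs * (cont u i (l - 2) * cont u (m + 2) s) :=
  euler_identity_for_continuants_general u hil hlm hms
end

section
/- Explicit formulas for the second half of the remainders of the Euclidean algorithm with symmetric quotients: let q_1, …, q_s be positive integers, let r_1, …, r_{2s+2} be the associated remainder sequence of the symmetric Euclidean scheme, and let 𝔠_{i,j} denote the continuants of (q_1, …, q_s). Then for every 1 ≤ i ≤ s+1, r_{2s−i+3} = 𝔠_{1,i−2} = (−1)^{i+s}·(𝔠_{1,s}·𝔠_{i,s−1} − 𝔠_{1,s−1}·𝔠_{i,s}). -/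
/-- The symmetric doubling of `(q_1, …, q_s)`:
`(Q_1, …, Q_{2s}) = (q_1, …, q_s, q_s, …, q_1)`. -/
def symQuot (q : ℤ → ℤ) (s : ℕ) (k : ℤ) : ℤ :=
  if k ≤ (s : ℤ) then q k else q (2 * (s : ℤ) + 1 - k)

/-- Auxiliary: `symAux q s m` is the remainder `r_{2s+2-m}` of the symmetric
Euclidean scheme attached to `(q_1, …, q_s)`. -/
def symAux (q : ℤ → ℤ) (s : ℕ) : ℕ → ℤ
  | 0 => 0
  | 1 => 1
  | m + 2 => symQuot q s (2 * (s : ℤ) - (m : ℤ)) * symAux q s (m + 1) + symAux q s m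

/-- `symRem q s k` is the remainder `r_k` of the symmetric Euclidean scheme attached to
`(q_1, …, q_s)`: with `(Q_1, …, Q_{2s}) = (q_1, …, q_s, q_s, …, q_1)`, one has
`r_{2s+2} = 0`, `r_{2s+1} = 1`, and `r_k = Q_k * r_{k+1} + r_{k+2}` for `1 ≤ k ≤ 2s`. -/
def symRem (q : ℤ → ℤ) (s : ℕ) (k : ℤ) : ℤ :=
  symAux q s (2 * (s : ℤ) + 2 - k).toNat

/-!
Read from the bottom, the symmetric quotient sequence is `q_1, …, q_s` for the first `s` steps, so
the last remainders obey the recurrence and the initial values of `j ↦ 𝔠_{1,j}`.  For the second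
formula, `j ↦ 𝔠_{1,j}` and `j ↦ 𝔠_{i,j}` solve the same linear recurrence
`x_j = u_j x_{j-1} + x_{j-2}`, so their Casoratian only changes sign from one `j` to the next;
comparing `j = s` with `j = i - 1`, where `𝔠_{i,i-1} = 1` and `𝔠_{i,i-2} = 0`, gives the claim.
-/

section Continuant

variable (u : ℤ → ℤ)

theorem cont_sub_one_self (i : ℤ) : cont u i (i - 1) = 1 := by
  simp [cont, contAux]

theorem cont_sub_two_self (i : ℤ) : cont u i (i - 2) = 0 :=
  if_pos (by lia)

theorem cont_sub_one_add_natCast (i : ℤ) (n : ℕ) : cont u i (i - 1 + n) = contAux u i n := by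
  have length_eq : (i - 1 + n + 1 - i).toNat = n := by lia
  rw [cont, if_neg (by lia), length_eq]

theorem cont_eq_mul_add {i j : ℤ} (hij : i ≤ j) :
    cont u i j = u j * cont u i (j - 1) + cont u i (j - 2) := by
  obtain ⟨n, rfl⟩ := Int.le.dest hij
  cases n with
  | zero =>
    have cont_self : cont u i i = u i := by simpa [contAux] using cont_sub_one_add_natCast u i 1
    simp [cont_self, cont_sub_one_self, cont_sub_two_self]
  | succ n =>
    calc cont u i (i + (n + 1 : ℕ))
        = contAux u i (n + 2) := by
          rw [← cont_sub_one_add_natCast]; congr 1; push_cast; ring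
      _ = u (i + n + 1) * contAux u i (n + 1) + contAux u i n := rfl
      _ = u (i + (n + 1 : ℕ)) * cont u i (i + (n + 1 : ℕ) - 1)
            + cont u i (i + (n + 1 : ℕ) - 2) := by
          rw [← cont_sub_one_add_natCast, ← cont_sub_one_add_natCast]
          push_cast
          ring_nf

/-- The Casoratian (discrete Wronskian) `𝔠_{k,j} 𝔠_{i,j-1} - 𝔠_{k,j-1} 𝔠_{i,j}` of the sequences
`j ↦ 𝔠_{k,j}` and `j ↦ 𝔠_{i,j}`, which depends on `j` only through a sign once `k, i ≤ j + 1`. -/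
def contCasoratian (k i j : ℤ) : ℤ :=
  cont u k j * cont u i (j - 1) - cont u k (j - 1) * cont u i j

theorem contCasoratian_sub_one_right (k i : ℤ) :
    contCasoratian u k i (i - 1) = -cont u k (i - 2) := by
  have two_steps : i - 1 - 1 = i - 2 := by ring
  rw [contCasoratian, two_steps, cont_sub_one_self, cont_sub_two_self]
  ring

theorem contCasoratian_add_one {k i j : ℤ} (hkj : k ≤ j + 1) (hij : i ≤ j + 1) :
    contCasoratian u k i (j + 1) = -contCasoratian u k i j := by
  have two_steps : j + 1 - 2 = j - 1 := by ring
  rw [contCasoratian, contCasoratian, cont_eq_mul_add u hkj, cont_eq_mul_add u hij,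
    add_sub_cancel_right, two_steps]
  ring

theorem cont_sub_two_eq_negOnePow_mul_contCasoratian {k i j : ℤ} (hki : k ≤ i)
    (hij : i - 1 ≤ j) :
    cont u k (i - 2) = (i + j).negOnePow * contCasoratian u k i j := by
  induction j, hij using Int.leInduction with
  | base =>
    have sign_eq : (i + (i - 1)).negOnePow = -1 := Int.negOnePow_odd _ ⟨i - 1, by ring⟩
    simp [sign_eq, contCasoratian_sub_one_right]
  | succ j hij ih =>
    rw [contCasoratian_add_one u (by lia) (by lia), ← add_assoc, Int.negOnePow_succ,
      Units.val_neg, neg_mul_neg]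
    exact ih

end Continuant

section SymmetricEuclid

variable (q : ℤ → ℤ) (s : ℕ)

theorem symQuot_of_lt {k : ℤ} (hk : (s : ℤ) < k) : symQuot q s k = q (2 * s + 1 - k) :=
  if_neg hk.not_ge

theorem symAux_eq_cont : ∀ m : ℕ, m ≤ s + 1 → symAux q s m = cont q 1 (m - 1)
  | 0, _ => (cont_sub_two_self q 1).symm
  | 1, _ => (cont_sub_one_self q 1).symm
  | m + 2, hm => by
    have quot_eq : symQuot q s (2 * s - m) = q (m + 1) := by
      rw [symQuot_of_lt q s (by lia)]
      ring_nf
    rw [symAux, quot_eq, symAux_eq_cont (m + 1) (by lia), symAux_eq_cont m (by lia),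
      cont_eq_mul_add q (by lia : (1 : ℤ) ≤ (m + 2 : ℕ) - 1)]
    push_cast
    ring_nf

theorem symRem_two_mul_add_one_sub {j : ℤ} (hj : -1 ≤ j) (hjs : j ≤ s) :
    symRem q s (2 * s + 1 - j) = cont q 1 j := by
  rw [symRem, symAux_eq_cont q s _ (by lia)]
  congr 1
  lia

end SymmetricEuclid

theorem symRem_second_half_formula_general
    (s : ℕ) (q : ℤ → ℤ) (i : ℤ) (hi : 1 ≤ i) (his : i ≤ (s : ℤ) + 1) :
    symRem q s (2 * (s : ℤ) - i + 3) = cont q 1 (i - 2) ∧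
      cont q 1 (i - 2) =
        (-1 : ℤ) ^ (i + (s : ℤ)).natAbs *
          (cont q 1 (s : ℤ) * cont q i ((s : ℤ) - 1) -
            cont q 1 ((s : ℤ) - 1) * cont q i (s : ℤ)) := by
  constructor
  · have index_eq : 2 * (s : ℤ) - i + 3 = 2 * s + 1 - (i - 2) := by ring
    rw [index_eq]
    exact symRem_two_mul_add_one_sub q s (by lia) (by lia)
  · have sign_eq : ((i + s).negOnePow : ℤ) = (-1) ^ (i + (s : ℤ)).natAbs :=
      Int.coe_negOnePow ℤ (i + s)
    rw [← sign_eq]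
    exact cont_sub_two_eq_negOnePow_mul_contCasoratian q hi (by lia)

theorem symRem_second_half_formula
    (s : ℕ) (hs : 1 ≤ s) (q : ℤ → ℤ) (hq : ∀ k : ℤ, 1 ≤ k → k ≤ (s : ℤ) → 0 < q k)
    (i : ℤ) (hi : 1 ≤ i) (his : i ≤ (s : ℤ) + 1) :
    symRem q s (2 * (s : ℤ) - i + 3) = cont q 1 (i - 2) ∧
      cont q 1 (i - 2) =
        (-1 : ℤ) ^ (i + (s : ℤ)).natAbs *
          (cont q 1 (s : ℤ) * cont q i ((s : ℤ) - 1) -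
            cont q 1 ((s : ℤ) - 1) * cont q i (s : ℤ)) :=
  symRem_second_half_formula_general s q i hi his
end

section
/- Brillhart's formula: let q_1, …, q_s be positive integers and let r_1, …, r_{2s+2} be the associated remainder sequence of the symmetric Euclidean scheme with n = r_1. Then n = r_{s+1}² + r_{s+2}²; that is, n is the sum of the squares of the two middle remainders. -/
/-!
A recurrence `r k = Q k * r (k + 1) + r (k + 2)` with palindromic quotients `Q` conserves the
bilinear expression `r k * r (N + 2 - k) + r (k + 1) * r (N + 3 - k)`: passing from `k` to `k + 1`
expands `r k` in one term and contracts `r (N + 1 - k)` in the other, with the same quotient.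
At `k = 1` the expression is `n`, since the last two remainders are `1` and `0`; when `N = 2 * s`,
at `k = s + 1` it is the sum of the squares of the two middle remainders.
-/

section Palindromic

variable {R : Type*} [CommSemiring R] {Q r : ℤ → R} {N : ℤ}

/-- The dot product of the window `(r k, r (k + 1))` with the mirror window
`(r (N + 2 - k), r (N + 3 - k))`, both read in increasing order of index; it is the quantity
conserved along a palindromic Euclidean scheme. The mirror is that of the index range
`1, …, N + 2` of the remainders in a scheme with `N` quotients. -/
def mirrorPairing (r : ℤ → R) (N k : ℤ) : R :=
  r k * r (N + 2 - k) + r (k + 1) * r (N + 3 - k)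

lemma mirrorPairing_succ
    (hQ : ∀ k, 1 ≤ k → k ≤ N → Q (N + 1 - k) = Q k)
    (hr : ∀ k, 1 ≤ k → k ≤ N → r k = Q k * r (k + 1) + r (k + 2))
    {k : ℤ} (hk : 1 ≤ k) (hkN : k ≤ N) :
    mirrorPairing r N (k + 1) = mirrorPairing r N k := by
  have expand_mirror : r (N + 1 - k) = Q k * r (N + 2 - k) + r (N + 3 - k) := by
    rw [hr (N + 1 - k) (by lia) (by lia), hQ k hk hkN]
    ring_nf
  calc mirrorPairing r N (k + 1)
      = r (k + 1) * r (N + 1 - k) + r (k + 2) * r (N + 2 - k) := by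
        rw [mirrorPairing]
        ring_nf
    _ = (Q k * r (k + 1) + r (k + 2)) * r (N + 2 - k) + r (k + 1) * r (N + 3 - k) := by
        rw [expand_mirror]
        ring
    _ = mirrorPairing r N k := by rw [← hr k hk hkN, mirrorPairing]

theorem mirrorPairing_eq_mirrorPairing_one
    (hQ : ∀ k, 1 ≤ k → k ≤ N → Q (N + 1 - k) = Q k)
    (hr : ∀ k, 1 ≤ k → k ≤ N → r k = Q k * r (k + 1) + r (k + 2))
    {k : ℤ} (hk : 1 ≤ k) (hkN : k ≤ N + 1) :
    mirrorPairing r N k = mirrorPairing r N 1 := by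
  induction k, hk using Int.leInduction with
  | base => rfl
  | succ k hk ih => rw [mirrorPairing_succ hQ hr hk (by lia), ih (by lia)]

lemma mirrorPairing_one (r : ℤ → R) (N : ℤ) :
    mirrorPairing r N 1 = r 1 * r (N + 1) + r 2 * r (N + 2) := by
  rw [mirrorPairing]
  ring_nf

lemma mirrorPairing_two_mul_middle (r : ℤ → R) (s : ℤ) :
    mirrorPairing r (2 * s) (s + 1) = r (s + 1) ^ 2 + r (s + 2) ^ 2 := by
  rw [mirrorPairing]
  ring_nf

end Palindromic

section SymmetricScheme

variable (q : ℤ → ℤ) (s : ℕ)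

lemma symQuot_reflect (k : ℤ) : symQuot q s (2 * s + 1 - k) = symQuot q s k := by
  rcases le_or_gt k s with hk | hk
  · rw [symQuot, symQuot, if_neg (by lia), if_pos hk, sub_sub_cancel]
  · rw [symQuot, symQuot, if_pos (by lia), if_neg (by lia)]

lemma symRem_two_mul_add_two : symRem q s (2 * s + 2) = 0 := by
  rw [symRem, sub_self, Int.toNat_zero, symAux]

lemma symRem_two_mul_add_one : symRem q s (2 * s + 1) = 1 := by
  rw [symRem, show (2 * (s : ℤ) + 2 - (2 * s + 1)).toNat = 1 by lia, symAux]

lemma symRem_eq_symQuot_mul_add {k : ℤ} (hk : k ≤ 2 * s) :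
    symRem q s k = symQuot q s k * symRem q s (k + 1) + symRem q s (k + 2) := by
  obtain ⟨m, rfl⟩ : ∃ m : ℕ, k = 2 * s - m := ⟨(2 * s - k).toNat, by lia⟩
  simp only [symRem]
  rw [show (2 * (s : ℤ) + 2 - (2 * s - m)).toNat = m + 2 by lia,
    show (2 * (s : ℤ) + 2 - (2 * s - m + 1)).toNat = m + 1 by lia,
    show (2 * (s : ℤ) + 2 - (2 * s - m + 2)).toNat = m by lia, symAux]

theorem brillhart_sum_of_two_squares_general :
    symRem q s 1 = symRem q s (s + 1) ^ 2 + symRem q s (s + 2) ^ 2 := by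
  calc symRem q s 1
      = mirrorPairing (symRem q s) (2 * s) 1 := by
        rw [mirrorPairing_one, symRem_two_mul_add_one, symRem_two_mul_add_two, mul_one, mul_zero,
          add_zero]
    _ = mirrorPairing (symRem q s) (2 * s) (s + 1) :=
        (mirrorPairing_eq_mirrorPairing_one (fun k _ _ ↦ symQuot_reflect q s k)
          (fun _ _ hk ↦ symRem_eq_symQuot_mul_add q s hk) (by lia) (by lia)).symm
    _ = symRem q s (s + 1) ^ 2 + symRem q s (s + 2) ^ 2 := mirrorPairing_two_mul_middle _ _

end SymmetricScheme

theorem brillhart_sum_of_two_squares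
    (s : ℕ) (hs : 1 ≤ s) (q : ℤ → ℤ) (hq : ∀ k : ℤ, 1 ≤ k → k ≤ (s : ℤ) → 0 < q k) :
    symRem q s 1 = symRem q s ((s : ℤ) + 1) ^ 2 + symRem q s ((s : ℤ) + 2) ^ 2 := by
  exact brillhart_sum_of_two_squares_general q s
end

section
/- Second family of quadratic forms in the remainders: let q_1, …, q_s be positive integers, let r_1, …, r_{2s+2} be the associated remainder sequence of the symmetric Euclidean scheme with n = r_1, and let i, j be integers with 0 ≤ j ≤ i ≤ s. Let r'_1, r'_2, … denote the remainder sequence of the symmetric Euclidean scheme associated to the truncated sequence (q_{i−j+1}, …, q_s). Then r_{i−j+1}·r_{i+j+2} − r_{2s+1−i−j}·r_{2s+2−i+j} = n·r'_{2j+2}. -/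
/-!
By the palindromic symmetry of `(Q_1, …, Q_{2s})`, the remainder `r_k` is both the continuant of
`(Q_k, …, Q_{2s})` and that of `(Q_1, …, Q_{2s+1-k})`. Writing one factor of each product in the
first form and the other in the second turns the claim into Euler's identity for two overlapping
intervals of quotients: the product of their continuants is the continuant of the union times that
of the intersection, plus or minus the product of two continuants coming from the remaining ends.
Here the intersection is `(Q_{i-j+1}, …, Q_{2s-i-j-1})`, an initial segment of the truncated
symmetric sequence whose continuant is the truncated remainder of index `2j+2`, and its odd length
makes the sign positive.
-/

section Continuant

variable {R : Type*}

/-- `continuant f n` is the continuant of the `n - 1` entries `f 0, …, f (n - 2)`. The index is one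
more than the number of entries, so that `continuant f 0 = 0` starts the recurrence, as
`r_{2s+2} = 0` does for the remainders, and `continuant (fun k ↦ f (d + k)) n` is the continuant of
the `n - 1` entries from `f d` on. -/
def continuant [Semiring R] (f : ℕ → R) : ℕ → R
  | 0 => 0
  | 1 => 1
  | n + 2 => f n * continuant f (n + 1) + continuant f n

theorem continuant_add_two [Semiring R] (f : ℕ → R) (n : ℕ) :
    continuant f (n + 2) = f n * continuant f (n + 1) + continuant f n :=
  rfl

variable [CommRing R] (f g : ℕ → R)

theorem continuant_mul_continuant_shift_succ (d t : ℕ) :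
    continuant f (d + t) * continuant (fun k ↦ f (d + k)) (t + 1) =
      continuant f (d + t + 1) * continuant (fun k ↦ f (d + k)) t +
        (-1) ^ t * continuant f d := by
  induction t with
  | zero => simp [continuant]
  | succ t ih =>
    simp only [← add_assoc, continuant_add_two]
    linear_combination -ih

/-- Euler's identity. As functions of `p`, both sides satisfy the recurrence with coefficients
`f (d + t + p)`. -/
theorem continuant_mul_continuant_shift (d t p : ℕ) :
    continuant f (d + t) * continuant (fun k ↦ f (d + k)) (t + p) =
      continuant f (d + t + p) * continuant (fun k ↦ f (d + k)) t +
        (-1) ^ t * continuant f d * continuant (fun k ↦ f (d + t + k)) p := by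
  induction p using Nat.twoStepInduction with
  | zero => simp [continuant]
  | one => simpa [continuant] using continuant_mul_continuant_shift_succ f d t
  | more p ih₀ ih₁ =>
    simp only [← add_assoc, continuant_add_two] at ih₁ ⊢
    linear_combination f (d + t + p) * ih₁ + ih₀

theorem continuant_add_two_eq_head (n : ℕ) :
    continuant f (n + 2) =
      f 0 * continuant (fun k ↦ f (1 + k)) (n + 1) + continuant (fun k ↦ f (2 + k)) n := by
  have euler := continuant_mul_continuant_shift f 1 1 n
  rw [add_comm 1 n, add_comm (1 + 1) n] at euler
  simp only [continuant, Nat.reduceAdd] at euler ⊢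
  linear_combination -euler

variable {f g}

theorem continuant_eq_of_reverse {n : ℕ} (h : ∀ k l, k + l + 2 = n → f k = g l) :
    continuant f n = continuant g n := by
  induction n using Nat.twoStepInduction generalizing g with
  | zero => rfl
  | one => rfl
  | more n ih₀ ih₁ =>
    rw [continuant_add_two_eq_head g, continuant_add_two, h n 0 rfl,
      ih₁ fun k l hkl ↦ h k (1 + l) (by omega), ih₀ fun k l hkl ↦ h k (2 + l) (by omega)]

theorem continuant_mul_continuant_of_palindrome {d t p : ℕ}
    (h : ∀ k l, k + l + 2 = d + t + p → f k = f l) :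
    continuant f (d + t) * continuant f (t + p) =
      continuant f (d + t + p) * continuant (fun k ↦ f (d + k)) t +
        (-1) ^ t * continuant f d * continuant f p := by
  have suffix_from_d : continuant (fun k ↦ f (d + k)) (t + p) = continuant f (t + p) :=
    continuant_eq_of_reverse fun k l hkl ↦ h (d + k) l (by omega)
  have suffix_from_d_add_t : continuant (fun k ↦ f (d + t + k)) p = continuant f p :=
    continuant_eq_of_reverse fun k l hkl ↦ h (d + t + k) l (by omega)
  rw [← suffix_from_d, ← suffix_from_d_add_t, continuant_mul_continuant_shift]

end Continuant

section SymmetricScheme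

variable (q : ℤ → ℤ) {s : ℕ}

theorem symQuot_eq_of_add_eq {k l : ℤ} (h : k + l = 2 * s + 1) :
    symQuot q s k = symQuot q s l := by
  unfold symQuot
  split_ifs <;> first | omega | (congr 1; omega)

theorem symQuot_shift {d s' : ℕ} (h : s' + d = s) (k : ℤ) :
    symQuot (fun l ↦ q (l + d)) s' k = symQuot q s (d + k) := by
  simp only [symQuot]
  split_ifs <;> first | omega | (congr 1; omega)

theorem symAux_eq_continuant (m : ℕ) :
    symAux q s m = continuant (fun k ↦ symQuot q s (k + 1)) m := by
  induction m using Nat.twoStepInduction with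
  | zero => rfl
  | one => rfl
  | more m ih₀ ih₁ =>
    rw [symAux, continuant_add_two, ih₀, ih₁, symQuot_eq_of_add_eq q (l := m + 1) (by ring)]

theorem symRem_eq_continuant {k : ℤ} {m : ℕ} (h : k + m = 2 * s + 2) :
    symRem q s k = continuant (fun k ↦ symQuot q s (k + 1)) m := by
  rw [symRem, symAux_eq_continuant, show (2 * (s : ℤ) + 2 - k).toNat = m by omega]

theorem symRem_shift_eq_continuant {d s' m : ℕ} {k : ℤ} (hs' : s' + d = s)
    (h : k + m = 2 * s' + 2) :
    symRem (fun l ↦ q (l + d)) s' k =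
      continuant (fun k ↦ symQuot q s (((d + k : ℕ) : ℤ) + 1)) m := by
  simp only [symRem_eq_continuant _ h, symQuot_shift q hs', Nat.cast_add, add_assoc]

end SymmetricScheme

theorem second_family_of_quadratic_forms_general (s : ℕ) (q : ℤ → ℤ) (i j : ℕ)
    (hji : j ≤ i) (his : i ≤ s) :
    symRem q s ((i : ℤ) - (j : ℤ) + 1) * symRem q s ((i : ℤ) + (j : ℤ) + 2) -
        symRem q s (2 * (s : ℤ) + 1 - (i : ℤ) - (j : ℤ)) *
          symRem q s (2 * (s : ℤ) + 2 - (i : ℤ) + (j : ℤ)) =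
      symRem q s 1 *
        symRem (fun k => q (k + (i : ℤ) - (j : ℤ))) (s - i + j) (2 * (j : ℤ) + 2) := by
  obtain ⟨d, rfl⟩ := Nat.exists_eq_add_of_le hji
  obtain ⟨u, rfl⟩ := Nat.exists_eq_add_of_le his
  have truncation : (fun k ↦ q (k + ((j + d : ℕ) : ℤ) - (j : ℤ))) = fun k ↦ q (k + d) := by
    funext k
    congr 1
    omega
  have euler := continuant_mul_continuant_of_palindrome
    (f := fun k : ℕ ↦ symQuot q (j + d + u) (k + 1)) (d := d) (t := 2 * u) (p := d + 2 * j + 1)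
    fun k l hkl ↦ symQuot_eq_of_add_eq q (by omega)
  rw [Even.neg_one_pow (even_two_mul u)] at euler
  rw [truncation, symRem_shift_eq_continuant q (s := j + d + u) (m := 2 * u) (by omega) (by omega),
    symRem_eq_continuant q (m := 2 * u + (d + 2 * j + 1)) (by omega),
    symRem_eq_continuant q (m := d + 2 * u) (by omega),
    symRem_eq_continuant q (m := d + 2 * j + 1) (by omega),
    symRem_eq_continuant q (m := d) (by omega),
    symRem_eq_continuant q (m := d + 2 * u + (d + 2 * j + 1)) (by omega)]
  linear_combination euler

theorem second_family_of_quadratic_forms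
    (s : ℕ) (hs : 1 ≤ s) (q : ℤ → ℤ) (hq : ∀ k : ℤ, 1 ≤ k → k ≤ (s : ℤ) → 0 < q k)
    (i j : ℕ) (hji : j ≤ i) (his : i ≤ s) :
    symRem q s ((i : ℤ) - (j : ℤ) + 1) * symRem q s ((i : ℤ) + (j : ℤ) + 2) -
        symRem q s (2 * (s : ℤ) + 1 - (i : ℤ) - (j : ℤ)) *
          symRem q s (2 * (s : ℤ) + 2 - (i : ℤ) + (j : ℤ)) =
      symRem q s 1 *
        symRem (fun k => q (k + (i : ℤ) - (j : ℤ))) (s - i + j) (2 * (j : ℤ) + 2) :=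
  second_family_of_quadratic_forms_general s q i j hji his
end

section
/- Corollary on the once-truncated symmetric continued fraction: let s ≥ 2, let q_1, …, q_s be positive integers, let r_1, …, r_{2s+2} be the associated remainder sequence of the symmetric Euclidean scheme with n = r_1 and a = r_2, and let n' = r'_1 and a' = r'_2 be the first two remainders of the symmetric Euclidean scheme associated to (q_2, …, q_s) (so n'/a' is the reduced fraction [q_2, …, q_s, q_s, …, q_2]). Then n·n' = a² + 1 (so n' = (a²+1)/n), and a' = a − q_1·n', which is the remainder when a is divided by n'. -/
/-!
Multiplying by `!![x, 1; 1, 0]` performs one Euclidean step with quotient `x`. Hence, if `P` is the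
product of these symmetric matrices over `q_1, …, q_s`, the remainders `(r_1, r_2) = (n, a)` form
the first column of `P * Pᵀ`, a symmetric matrix of determinant `((-1) ^ s) ^ 2 = 1`. Splitting off
the outermost factors gives
`!![n, a; a, d] = !![q_1, 1; 1, 0] * !![n', a'; a', d'] * !![q_1, 1; 1, 0]`,
whose bottom row reads `a = q_1 * n' + a'` and `d = n'`; the determinant then reads
`n * n' - a ^ 2 = 1`. The bounds `0 ≤ a < n` follow from these two identities by induction on `s`.
-/

open Matrix

section QuotMatrix

variable {R : Type*} [CommRing R]

/-- The matrix of one Euclidean step with quotient `x`, sending the column `(r_{k+1}, r_{k+2})` to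
`(r_k, r_{k+1})` when `r_k = x * r_{k+1} + r_{k+2}`. -/
def quotMatrix (x : R) : Matrix (Fin 2) (Fin 2) R :=
  !![x, 1; 1, 0]

/-- The product of the Euclidean step matrices with quotients `q 1, …, q s`, in this order; its
entries are the continuants of segments of this sequence. -/
def quotMatrixProd (q : ℤ → R) (s : ℕ) : Matrix (Fin 2) (Fin 2) R :=
  ((List.range s).map fun i : ℕ => quotMatrix (q (i + 1))).prod

/-- The product of the Euclidean step matrices along the palindrome `q 1, …, q s, q s, …, q 1`. As
the factors are symmetric, the second half is encoded as the transpose of the first. -/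
def symMatrix (q : ℤ → R) (s : ℕ) : Matrix (Fin 2) (Fin 2) R :=
  quotMatrixProd q s * (quotMatrixProd q s)ᵀ

lemma quotMatrix_transpose (x : R) : (quotMatrix x)ᵀ = quotMatrix x := by
  ext i j
  fin_cases i <;> fin_cases j <;> rfl

lemma det_quotMatrix (x : R) : (quotMatrix x).det = -1 := by
  simp [quotMatrix]

lemma quotMatrix_mulVec (x b c : R) : quotMatrix x *ᵥ ![b, c] = ![x * b + c, b] := by
  ext i
  fin_cases i <;> simp [quotMatrix, mulVec, dotProduct]

lemma quotMatrixProd_zero (q : ℤ → R) : quotMatrixProd q 0 = 1 := rfl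

lemma quotMatrixProd_succ (q : ℤ → R) (s : ℕ) :
    quotMatrixProd q (s + 1) = quotMatrixProd q s * quotMatrix (q (s + 1)) :=
  List.prod_range_succ _ s

lemma quotMatrixProd_succ' (q : ℤ → R) (s : ℕ) :
    quotMatrixProd q (s + 1) = quotMatrix (q 1) * quotMatrixProd (fun k => q (k + 1)) s := by
  simpa [quotMatrixProd] using List.prod_range_succ' (fun i : ℕ => quotMatrix (q (i + 1))) s

lemma det_quotMatrixProd (q : ℤ → R) (s : ℕ) : (quotMatrixProd q s).det = (-1) ^ s := by
  induction s with
  | zero => simp [quotMatrixProd_zero]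
  | succ s ih => rw [quotMatrixProd_succ, det_mul, ih, det_quotMatrix, pow_succ]

lemma symMatrix_isSymm (q : ℤ → R) (s : ℕ) : (symMatrix q s).IsSymm :=
  isSymm_mul_transpose_self _

lemma det_symMatrix (q : ℤ → R) (s : ℕ) : (symMatrix q s).det = 1 := by
  rw [symMatrix, det_mul, det_transpose, det_quotMatrixProd, ← mul_pow, neg_one_mul, neg_neg,
    one_pow]

lemma symMatrix_succ (q : ℤ → R) (s : ℕ) :
    symMatrix q (s + 1) =
      quotMatrix (q 1) * symMatrix (fun k => q (k + 1)) s * quotMatrix (q 1) := by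
  simp only [symMatrix, quotMatrixProd_succ', transpose_mul, quotMatrix_transpose, Matrix.mul_assoc]

lemma symMatrix_succ_one_zero (q : ℤ → R) (s : ℕ) :
    symMatrix q (s + 1) 1 0 =
      q 1 * symMatrix (fun k => q (k + 1)) s 0 0 + symMatrix (fun k => q (k + 1)) s 1 0 := by
  rw [← (symMatrix_isSymm (fun k => q (k + 1)) s).apply 1 0, symMatrix_succ]
  simp [quotMatrix, Matrix.mul_apply, vecMul, dotProduct, mul_comm]

lemma symMatrix_succ_one_one (q : ℤ → R) (s : ℕ) :
    symMatrix q (s + 1) 1 1 = symMatrix (fun k => q (k + 1)) s 0 0 := by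
  simp [symMatrix_succ, quotMatrix, Matrix.mul_apply, vecMul, dotProduct]

end QuotMatrix

section Remainders

variable (q : ℤ → ℤ) (s : ℕ)

lemma symAux_step (m : ℕ) :
    ![symAux q s (m + 2), symAux q s (m + 1)] =
      quotMatrix (symQuot q s (2 * s - m)) *ᵥ ![symAux q s (m + 1), symAux q s m] := by
  rw [quotMatrix_mulVec, symAux]

lemma symAux_eq_transpose_quotMatrixProd_mulVec {m : ℕ} (hm : m ≤ s) :
    ![symAux q s (m + 1), symAux q s m] = (quotMatrixProd q m)ᵀ *ᵥ ![1, 0] := by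
  induction m with
  | zero => simp [quotMatrixProd_zero, symAux]
  | succ m ih =>
    have quot_eq : symQuot q s (2 * s - m) = q (m + 1) := by
      rw [symQuot, if_neg (by omega)]
      congr 1
      ring
    rw [symAux_step, quot_eq, ih (by omega), quotMatrixProd_succ, transpose_mul,
      quotMatrix_transpose, mulVec_mulVec]

-- Past the middle of the palindrome, each Euclidean step absorbs the last factor of the product.
lemma quotMatrixProd_mulVec_symAux {i j : ℕ} (hij : i + j = s) :
    quotMatrixProd q i *ᵥ ![symAux q s (s + j + 1), symAux q s (s + j)] =
      quotMatrixProd q s *ᵥ ![symAux q s (s + 1), symAux q s s] := by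
  induction j generalizing i with
  | zero => rw [← hij]; rfl
  | succ j ih =>
    have quot_eq : symQuot q s (2 * s - (s + j : ℕ)) = q (i + 1) := by
      rw [symQuot, if_pos (by omega)]
      congr 1
      omega
    rw [← ih (i := i + 1) (by omega), quotMatrixProd_succ, ← mulVec_mulVec, ← quot_eq,
      ← symAux_step, ← Nat.add_assoc]

lemma symRem_eq_symMatrix_mulVec :
    ![symRem q s 1, symRem q s 2] = symMatrix q s *ᵥ ![1, 0] := by
  have one_index : (2 * (s : ℤ) + 2 - 1).toNat = s + s + 1 := by omega
  have two_index : (2 * (s : ℤ) + 2 - 2).toNat = s + s := by omega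
  calc ![symRem q s 1, symRem q s 2]
      = quotMatrixProd q 0 *ᵥ ![symAux q s (s + s + 1), symAux q s (s + s)] := by
        rw [symRem, symRem, one_index, two_index, quotMatrixProd_zero, one_mulVec]
    _ = quotMatrixProd q s *ᵥ ![symAux q s (s + 1), symAux q s s] :=
        quotMatrixProd_mulVec_symAux q s (Nat.zero_add s)
    _ = symMatrix q s *ᵥ ![1, 0] := by
        rw [symAux_eq_transpose_quotMatrixProd_mulVec q s le_rfl, mulVec_mulVec, symMatrix]

lemma symRem_one_eq_symMatrix : symRem q s 1 = symMatrix q s 0 0 := by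
  simpa [mulVec, dotProduct] using congrFun (symRem_eq_symMatrix_mulVec q s) 0

lemma symRem_two_eq_symMatrix : symRem q s 2 = symMatrix q s 1 0 := by
  simpa [mulVec, dotProduct] using congrFun (symRem_eq_symMatrix_mulVec q s) 1

lemma symRem_succ_two :
    symRem q (s + 1) 2 =
      q 1 * symRem (fun k => q (k + 1)) s 1 + symRem (fun k => q (k + 1)) s 2 := by
  simp only [symRem_one_eq_symMatrix, symRem_two_eq_symMatrix, symMatrix_succ_one_zero]

lemma symRem_succ_one_mul_symRem_one :
    symRem q (s + 1) 1 * symRem (fun k => q (k + 1)) s 1 = symRem q (s + 1) 2 ^ 2 + 1 := by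
  have det_eq := det_symMatrix q (s + 1)
  rw [det_fin_two, (symMatrix_isSymm q (s + 1)).apply 1 0, symMatrix_succ_one_one] at det_eq
  rw [symRem_one_eq_symMatrix, symRem_one_eq_symMatrix, symRem_two_eq_symMatrix]
  linear_combination det_eq

variable {q s}

lemma symRem_two_nonneg_and_lt_symRem_one (hq : ∀ k : ℤ, 1 ≤ k → k ≤ s → 0 < q k) :
    0 ≤ symRem q s 2 ∧ symRem q s 2 < symRem q s 1 := by
  induction s generalizing q with
  | zero => simp [symRem, symAux]
  | succ s ih =>
    obtain ⟨two_nonneg, two_lt_one⟩ :=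
      ih (q := fun k => q (k + 1)) fun k hk hks => hq (k + 1) (by omega) (by omega)
    have one_pos : 0 < symRem (fun k => q (k + 1)) s 1 := two_nonneg.trans_lt two_lt_one
    have one_le_two : symRem (fun k => q (k + 1)) s 1 ≤ symRem q (s + 1) 2 := by
      have quot_pos : 1 ≤ q 1 := hq 1 le_rfl (by omega)
      rw [symRem_succ_two]
      nlinarith
    have succ_two_nonneg : 0 ≤ symRem q (s + 1) 2 := one_pos.le.trans one_le_two
    refine ⟨succ_two_nonneg, lt_of_mul_lt_mul_right ?_ one_pos.le⟩
    calc symRem q (s + 1) 2 * symRem (fun k => q (k + 1)) s 1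
        ≤ symRem q (s + 1) 2 * symRem q (s + 1) 2 := by gcongr
      _ < symRem q (s + 1) 2 ^ 2 + 1 := by rw [sq]; exact lt_add_one _
      _ = symRem q (s + 1) 1 * symRem (fun k => q (k + 1)) s 1 :=
        (symRem_succ_one_mul_symRem_one q s).symm

end Remainders

theorem once_truncated_symmetric_scheme
    (s : ℕ) (hs : 2 ≤ s) (q : ℤ → ℤ) (hq : ∀ k : ℤ, 1 ≤ k → k ≤ (s : ℤ) → 0 < q k) :
    symRem q s 1 * symRem (fun k => q (k + 1)) (s - 1) 1 = symRem q s 2 ^ 2 + 1 ∧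
      symRem (fun k => q (k + 1)) (s - 1) 2 =
        symRem q s 2 - q 1 * symRem (fun k => q (k + 1)) (s - 1) 1 ∧
      symRem (fun k => q (k + 1)) (s - 1) 2 =
        symRem q s 2 % symRem (fun k => q (k + 1)) (s - 1) 1 := by
  obtain ⟨t, rfl⟩ : ∃ t, s = t + 1 := Nat.exists_eq_add_of_le' (by omega)
  rw [Nat.add_sub_cancel]
  obtain ⟨two_nonneg, two_lt_one⟩ :=
    symRem_two_nonneg_and_lt_symRem_one (q := fun k => q (k + 1)) (s := t)
      fun k hk hkt => hq (k + 1) (by omega) (by omega)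
  refine ⟨symRem_succ_one_mul_symRem_one q t, ?_, ?_⟩
  · rw [symRem_succ_two, add_sub_cancel_left]
  · rw [symRem_succ_two, Int.mul_add_emod_self_right, Int.emod_eq_of_lt two_nonneg two_lt_one]
end
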